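/- arXiv:2309.10378 — 2 statements merged into one kernel-verified Lean document; each statement's English description precedes it below -/
import Mathlib

section
/- Let (Ω, 𝒜, P) be a probability space, and for each ω ∈ Ω let Π_ω and Q_ω be probability measures on a measurable space (E, ℰ) depending measurably on ω. Let B ∈ ℰ and A ∈ 𝒜. If there exist C > 0 and δ > 0 such that ∫_A Π_ω(B^c) dP(ω) ≤ C e^{−δ}, then ∫_A Q_ω(B^c) dP(ω) ≤ (2/δ) [ ∫_A KL(Q_ω ‖ Π_ω) dP(ω) + C e^{−δ/2} ]. -/
open MeasureTheory ProbabilityTheory Filter Matrix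
open scoped ENNReal NNReal BigOperators Classical

noncomputable section

namespace GSVB

/-- Euclidean (ℓ2) norm of a finitely indexed real vector. -/
def l2 {ι : Type*} [Fintype ι] (v : ι → ℝ) : ℝ := Real.sqrt (∑ i, v i ^ 2)

/-- Maximal ℓ2 column norm of a matrix, ‖X‖. -/
def Xnorm {n p : ℕ} (X : Matrix (Fin n) (Fin p) ℝ) : ℝ :=
  ⨆ j : Fin p, l2 (fun i => X i j)

variable {n p M : ℕ}

/-- The set of coordinate indices assigned to group `k` (groups are given by the
assignment map `g : Fin p → Fin M`, so they automatically partition the coordinates). -/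
def grp (g : Fin p → Fin M) (k : Fin M) : Finset (Fin p) :=
  Finset.univ.filter fun j => g j = k

/-- Size `m_k` of group `k`. -/
def msize (g : Fin p → Fin M) (k : Fin M) : ℕ := (grp g k).card

/-- Maximal group size `m_max`. -/
def mmax (g : Fin p → Fin M) : ℕ := Finset.univ.sup (msize g)

/-- Group norm ‖β_{G_k}‖₂. -/
def gnorm (g : Fin p → Fin M) (β : Fin p → ℝ) (k : Fin M) : ℝ :=
  Real.sqrt (∑ j ∈ grp g k, β j ^ 2)

/-- ‖β‖_{2,1} = Σ_k ‖β_{G_k}‖₂. -/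
def norm21 (g : Fin p → Fin M) (β : Fin p → ℝ) : ℝ := ∑ k, gnorm g β k

/-- Group support S_β = {k : β_{G_k} ≠ 0}. -/
def gsupp (g : Fin p → Fin M) (β : Fin p → ℝ) : Finset (Fin M) :=
  Finset.univ.filter fun k => ∃ j ∈ grp g k, β j ≠ 0

/-- Compatibility number φ(S). -/
def compat (X : Matrix (Fin n) (Fin p) ℝ) (g : Fin p → Fin M) (S : Finset (Fin M)) : ℝ :=
  sInf { r : ℝ | ∃ β : Fin p → ℝ,
    ((∑ k ∈ Sᶜ, gnorm g β k) ≤ 7 * (∑ k ∈ S, gnorm g β k)) ∧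
    (∃ k ∈ S, gnorm g β k ≠ 0) ∧
    r = l2 (X.mulVec β) * Real.sqrt S.card / (Xnorm X * ∑ k ∈ S, gnorm g β k) }

/-- Uniform compatibility φ̄(s). -/
def ucompat (X : Matrix (Fin n) (Fin p) ℝ) (g : Fin p → Fin M) (s : ℝ) : ℝ :=
  sInf { r : ℝ | ∃ β : Fin p → ℝ, 1 ≤ (gsupp g β).card ∧ ((gsupp g β).card : ℝ) ≤ s ∧
    r = l2 (X.mulVec β) * Real.sqrt ((gsupp g β).card) / (Xnorm X * norm21 g β) }

/-- Smallest scaled sparse singular value φ̃(s). -/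
def ssv (X : Matrix (Fin n) (Fin p) ℝ) (g : Fin p → Fin M) (s : ℝ) : ℝ :=
  sInf { r : ℝ | ∃ β : Fin p → ℝ, 1 ≤ (gsupp g β).card ∧ ((gsupp g β).card : ℝ) ≤ s ∧
    r = l2 (X.mulVec β) / (Xnorm X * l2 β) }

/-- Normalizing constant Δ_m = 2^{-m} π^{(1-m)/2} Γ((m+1)/2)^{-1}. -/
def Δm (m : ℕ) : ℝ :=
  (2 : ℝ) ^ (-(m : ℝ)) * Real.pi ^ ((1 - (m : ℝ)) / 2) * (Real.Gamma (((m : ℝ) + 1) / 2))⁻¹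

/-- Value of the slab density Ψ_{λ,m} at a point with norm `r`:
Ψ_{λ,m}(b) = Δ_m λ^m exp(-λ‖b‖₂). -/
def psiDens (lam : ℝ) (m : ℕ) (r : ℝ) : ℝ := Δm m * lam ^ m * Real.exp (-lam * r)

/-- Coordinates of group `k` as a subtype. -/
abbrev GrpIdx (g : Fin p → Fin M) (k : Fin M) := { j : Fin p // g j = k }

/-- Slab measure on the coordinates of group `k`: density Ψ_{λ,m_k} w.r.t. Lebesgue. -/
def slab (g : Fin p → Fin M) (lam : ℝ) (k : Fin M) : Measure (GrpIdx g k → ℝ) :=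
  (volume : Measure (GrpIdx g k → ℝ)).withDensity fun b =>
    ENNReal.ofReal (psiDens lam (Fintype.card (GrpIdx g k)) (l2 b))

/-- Spike or slab on group `k`, according to whether `k` belongs to the model `S`. -/
def priorGroup (g : Fin p → Fin M) (lam : ℝ) (S : Finset (Fin M)) (k : Fin M) :
    Measure (GrpIdx g k → ℝ) :=
  if k ∈ S then slab g lam k else Measure.dirac 0

/-- Glue group-wise vectors into a vector in ℝ^p. -/
def assemble (g : Fin p → Fin M) (f : ∀ k, GrpIdx g k → ℝ) : Fin p → ℝ :=
  fun j => f (g j) ⟨j, rfl⟩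

/-- The model selection (group spike-and-slab) prior on ℝ^p. -/
def prior (g : Fin p → Fin M) (lam : ℝ) (piM : ℕ → ℝ) : Measure (Fin p → ℝ) :=
  ∑ S : Finset (Fin M),
    (ENNReal.ofReal (piM S.card / (M.choose S.card))) •
      Measure.map (assemble g) (Measure.pi (priorGroup g lam S))

/-- Gaussian likelihood ratio Λ_β(Y). -/
def lik (X : Matrix (Fin n) (Fin p) ℝ) (β0 β : Fin p → ℝ) (Y : Fin n → ℝ) : ℝ :=
  Real.exp (-(1/2) * (∑ i, (X.mulVec (β - β0)) i ^ 2)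
    + ∑ i, (Y i - X.mulVec β0 i) * (X.mulVec (β - β0)) i)

/-- Unnormalized posterior. -/
def postUn (X : Matrix (Fin n) (Fin p) ℝ) (g : Fin p → Fin M) (lam : ℝ) (piM : ℕ → ℝ)
    (β0 : Fin p → ℝ) (Y : Fin n → ℝ) : Measure (Fin p → ℝ) :=
  (prior g lam piM).withDensity fun β => ENNReal.ofReal (lik X β0 β Y)

/-- Posterior distribution Π(·|Y). -/
def posterior (X : Matrix (Fin n) (Fin p) ℝ) (g : Fin p → Fin M) (lam : ℝ) (piM : ℕ → ℝ)
    (β0 : Fin p → ℝ) (Y : Fin n → ℝ) : Measure (Fin p → ℝ) :=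
  (postUn X g lam piM β0 Y Set.univ)⁻¹ • postUn X g lam piM β0 Y

/-- Law of the data Y = Xβ₀ + ε, ε ~ N_n(0, I_n). -/
def Pdata (X : Matrix (Fin n) (Fin p) ℝ) (β0 : Fin p → ℝ) : Measure (Fin n → ℝ) :=
  Measure.pi fun i => gaussianReal (X.mulVec β0 i) 1

/-- Kullback–Leibler divergence KL(Q‖P) (equal to +∞ when not defined). -/
def KL {α : Type*} [MeasurableSpace α] (Q P : Measure α) : ℝ≥0∞ :=
  if Q ≪ P ∧ Integrable (llr Q P) Q then ENNReal.ofReal (∫ x, llr Q P x ∂Q) else ⊤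

/-- Variational family 𝒬 (diagonal covariance matrices within groups). -/
def famQ (g : Fin p → Fin M) : Set (Measure (Fin p → ℝ)) :=
  { Q | ∃ (γ : Fin M → ℝ) (μv : Fin p → ℝ) (σ : Fin p → ℝ≥0),
      (∀ k, γ k ∈ Set.Icc (0:ℝ) 1) ∧ (∀ j, 0 < σ j) ∧
      Q = Measure.map (assemble g) (Measure.pi fun k =>
        ENNReal.ofReal (γ k) •
            Measure.pi (fun j : GrpIdx g k => gaussianReal (μv j.1) (σ j.1))
          + ENNReal.ofReal (1 - γ k) • Measure.dirac 0) }

/-- Density of a multivariate Gaussian with mean `μv` and covariance `S`. -/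
def gaussDens {ι : Type*} [Fintype ι] [DecidableEq ι] (μv : ι → ℝ) (S : Matrix ι ι ℝ)
    (x : ι → ℝ) : ℝ :=
  (2 * Real.pi) ^ (-(Fintype.card ι : ℝ) / 2) * S.det ^ (-(1:ℝ)/2) *
    Real.exp (-(1/2) * ((x - μv) ⬝ᵥ S⁻¹.mulVec (x - μv)))

/-- Multivariate Gaussian measure N(μv, S). -/
def mvGauss {ι : Type*} [Fintype ι] [DecidableEq ι] (μv : ι → ℝ) (S : Matrix ι ι ℝ) :
    Measure (ι → ℝ) :=
  (volume : Measure (ι → ℝ)).withDensity fun x => ENNReal.ofReal (gaussDens μv S x)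

/-- Variational family 𝒬′ (arbitrary positive definite covariance within groups). -/
def famQ' (g : Fin p → Fin M) : Set (Measure (Fin p → ℝ)) :=
  { Q | ∃ (γ : Fin M → ℝ) (μv : Fin p → ℝ)
      (Sig : ∀ k : Fin M, Matrix (GrpIdx g k) (GrpIdx g k) ℝ),
      (∀ k, γ k ∈ Set.Icc (0:ℝ) 1) ∧ (∀ k, (Sig k).PosDef) ∧
      Q = Measure.map (assemble g) (Measure.pi fun k =>
        ENNReal.ofReal (γ k) • mvGauss (fun j => μv j.1) (Sig k)
          + ENNReal.ofReal (1 - γ k) • Measure.dirac 0) }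

/-- ‖X_{G_k}ᵀ u‖₂. -/
def grpTnorm (X : Matrix (Fin n) (Fin p) ℝ) (g : Fin p → Fin M) (k : Fin M)
    (u : Fin n → ℝ) : ℝ :=
  Real.sqrt (∑ j ∈ grp g k, (∑ i, X i j * u i) ^ 2)

/-- The event 𝒯₀. -/
def T0 (X : Matrix (Fin n) (Fin p) ℝ) (g : Fin p → Fin M) (β0 : Fin p → ℝ) :
    Set (Fin n → ℝ) :=
  { Y | ∀ k : Fin M, grpTnorm X g k (Y - X.mulVec β0) ≤
      3 * Xnorm X * Real.sqrt (Real.log M) }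

/-- The event 𝒯₁(Γ, ε, κ). -/
def T1 (X : Matrix (Fin n) (Fin p) ℝ) (g : Fin p → Fin M) (lam : ℝ) (piM : ℕ → ℝ)
    (β0 : Fin p → ℝ) (Γv εv κv : ℝ) : Set (Fin n → ℝ) :=
  T0 X g β0 ∩
    { Y | posterior X g lam piM β0 Y { β | Γv < ((gsupp g β).card : ℝ) } ≤ 1/4 } ∩
    { Y | posterior X g lam piM β0 Y { β | εv < l2 (β - β0) } ≤
        ENNReal.ofReal (Real.exp (-κv)) }

/-!
By Young's inequality `t * q ≤ klFun q + (exp t - 1)` applied to the density of `Q` with respect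
to `P`, the `Q`-mass of an event is bounded by its exponentially inflated `P`-mass plus the
divergence: `t * Q s ≤ klDiv Q P + (exp t - 1) * P s`. Integrating over the data and taking
`t = δ / 2` spends half of the exponent `δ` on the change of measure and keeps the other half.
-/

section ChangeOfMeasure

open InformationTheory

lemma mul_le_klFun_add_exp_sub_one {q : ℝ} (hq : 0 ≤ q) (t : ℝ) :
    t * q ≤ klFun q + (Real.exp t - 1) := by
  rw [klFun_apply]
  rcases hq.eq_or_lt with rfl | hq
  · simp [Real.exp_nonneg]
  · have tangent : q * (t - Real.log q + 1) ≤ Real.exp t := by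
      calc q * (t - Real.log q + 1)
          ≤ q * Real.exp (t - Real.log q) := by gcongr; exact Real.add_one_le_exp _
        _ = Real.exp t := by rw [Real.exp_sub, Real.exp_log hq, mul_div_cancel₀ _ hq.ne']
    linarith

variable {α : Type*} [MeasurableSpace α] {Q P : Measure α}

lemma KL_eq_klDiv (h : Q Set.univ = P Set.univ) : KL Q P = klDiv Q P := by
  simp [KL, klDiv_def, measureReal_def, h]

lemma lintegral_ofReal_le_klDiv_add_lintegral_exp_sub_one [IsFiniteMeasure Q] [IsFiniteMeasure P]
    {f : α → ℝ} (hf : AEMeasurable f P) :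
    ∫⁻ x, ENNReal.ofReal (f x) ∂Q ≤
      klDiv Q P + ∫⁻ x, ENNReal.ofReal (Real.exp (f x) - 1) ∂P := by
  by_cases hQP : Q ≪ P
  swap
  · simp [klDiv_of_not_ac hQP]
  have young : ∀ᵐ x ∂P, Q.rnDeriv P x * ENNReal.ofReal (f x) ≤
      ENNReal.ofReal (klFun (Q.rnDeriv P x).toReal) + ENNReal.ofReal (Real.exp (f x) - 1) := by
    filter_upwards [Q.rnDeriv_ne_top P] with x hx
    calc Q.rnDeriv P x * ENNReal.ofReal (f x)
        = ENNReal.ofReal (f x * (Q.rnDeriv P x).toReal) := by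
          rw [ENNReal.ofReal_mul' ENNReal.toReal_nonneg, ENNReal.ofReal_toReal hx, mul_comm]
      _ ≤ ENNReal.ofReal (klFun (Q.rnDeriv P x).toReal + (Real.exp (f x) - 1)) :=
          ENNReal.ofReal_le_ofReal (mul_le_klFun_add_exp_sub_one ENNReal.toReal_nonneg _)
      _ ≤ _ := ENNReal.ofReal_add_le
  calc ∫⁻ x, ENNReal.ofReal (f x) ∂Q
      = ∫⁻ x, Q.rnDeriv P x * ENNReal.ofReal (f x) ∂P :=
        (lintegral_rnDeriv_mul hQP hf.ennreal_ofReal).symm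
    _ ≤ ∫⁻ x, (ENNReal.ofReal (klFun (Q.rnDeriv P x).toReal)
          + ENNReal.ofReal (Real.exp (f x) - 1)) ∂P := lintegral_mono_ae young
    _ = klDiv Q P + ∫⁻ x, ENNReal.ofReal (Real.exp (f x) - 1) ∂P := by
        rw [lintegral_add_left (by fun_prop), klDiv_eq_lintegral_klFun_of_ac hQP]

lemma ofReal_mul_measure_le_klDiv_add [IsFiniteMeasure Q] [IsFiniteMeasure P]
    {s : Set α} (hs : MeasurableSet s) (t : ℝ) :
    ENNReal.ofReal t * Q s ≤ klDiv Q P + ENNReal.ofReal (Real.exp t - 1) * P s := by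
  have ofReal_comp_indicator (g : ℝ → ℝ) (hg : g 0 = 0) (x : α) :
      ENNReal.ofReal (g (s.indicator (fun _ ↦ t) x)) =
        s.indicator (fun _ ↦ ENNReal.ofReal (g t)) x := by
    by_cases hx : x ∈ s <;> simp [hx, hg]
  have h := lintegral_ofReal_le_klDiv_add_lintegral_exp_sub_one (Q := Q) (P := P)
    (measurable_const.indicator hs : Measurable (s.indicator fun _ ↦ t)).aemeasurable
  simpa only [ofReal_comp_indicator (fun r ↦ r) rfl,
    ofReal_comp_indicator (Real.exp · - 1) (by simp), lintegral_indicator_const hs] using h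

variable {Ω : Type*} [MeasurableSpace Ω]

lemma ofReal_mul_lintegral_measure_le_lintegral_klDiv_add (μ : Measure Ω) (κ : Kernel Ω α)
    [IsFiniteKernel κ] (ν : Ω → Measure α) [∀ ω, IsFiniteMeasure (ν ω)]
    {s : Set α} (hs : MeasurableSet s) (t : ℝ) :
    ENNReal.ofReal t * ∫⁻ ω, ν ω s ∂μ ≤
      ∫⁻ ω, klDiv (ν ω) (κ ω) ∂μ + ENNReal.ofReal (Real.exp t - 1) * ∫⁻ ω, κ ω s ∂μ := by
  calc ENNReal.ofReal t * ∫⁻ ω, ν ω s ∂μ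
      = ∫⁻ ω, ENNReal.ofReal t * ν ω s ∂μ :=
        (lintegral_const_mul' _ _ ENNReal.ofReal_ne_top).symm
    _ ≤ ∫⁻ ω, (klDiv (ν ω) (κ ω) + ENNReal.ofReal (Real.exp t - 1) * κ ω s) ∂μ :=
        lintegral_mono fun _ ↦ ofReal_mul_measure_le_klDiv_add hs t
    _ = _ := by
        rw [lintegral_add_right _ ((κ.measurable_coe hs).const_mul _),
          lintegral_const_mul' _ _ ENNReal.ofReal_ne_top]

theorem kl_transfer_general (μ : Measure Ω) (κ : Kernel Ω α) [IsFiniteKernel κ]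
    (ν : Ω → Measure α) [∀ ω, IsFiniteMeasure (ν ω)] {s : Set α} (hs : MeasurableSet s)
    {C : ℝ≥0∞} {δ : ℝ} (hδ : 0 < δ)
    (h : ∫⁻ ω, κ ω s ∂μ ≤ C * ENNReal.ofReal (Real.exp (-δ))) :
    ∫⁻ ω, ν ω s ∂μ ≤ ENNReal.ofReal (2 / δ) *
      (∫⁻ ω, klDiv (ν ω) (κ ω) ∂μ + C * ENNReal.ofReal (Real.exp (-δ / 2))) := by
  have exp_mul_le : ENNReal.ofReal (Real.exp (δ / 2) - 1) * ∫⁻ ω, κ ω s ∂μ ≤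
      C * ENNReal.ofReal (Real.exp (-δ / 2)) := by
    calc ENNReal.ofReal (Real.exp (δ / 2) - 1) * ∫⁻ ω, κ ω s ∂μ
        ≤ ENNReal.ofReal (Real.exp (δ / 2)) * (C * ENNReal.ofReal (Real.exp (-δ))) := by
          gcongr; exact sub_le_self _ zero_le_one
      _ = C * ENNReal.ofReal (Real.exp (-δ / 2)) := by
          rw [mul_left_comm, ← ENNReal.ofReal_mul (Real.exp_nonneg _), ← Real.exp_add]
          ring_nf
  have hδ2 : 0 < δ / 2 := half_pos hδ
  rw [← inv_div, ENNReal.ofReal_inv_of_pos hδ2,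
    ← ENNReal.mul_le_iff_le_inv (ENNReal.ofReal_pos.2 hδ2).ne' ENNReal.ofReal_ne_top]
  exact (ofReal_mul_lintegral_measure_le_lintegral_klDiv_add μ κ ν hs (δ / 2)).trans
    (by gcongr)

end ChangeOfMeasure

/-- Transfer of exponentially small posterior probability to the variational posterior
(Theorem 5 of Ray & Szabó). -/
theorem kl_transfer {Ω E : Type*} [MeasurableSpace Ω] [MeasurableSpace E]
    (P : Measure Ω) [IsProbabilityMeasure P]
    (Pk Qk : ProbabilityTheory.Kernel Ω E)
    [ProbabilityTheory.IsMarkovKernel Pk] [ProbabilityTheory.IsMarkovKernel Qk]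
    (B : Set E) (hB : MeasurableSet B) (A : Set Ω) (hA : MeasurableSet A)
    (C δ : ℝ) (hC : 0 < C) (hδ : 0 < δ)
    (h : (∫⁻ ω in A, Pk ω Bᶜ ∂P) ≤ ENNReal.ofReal (C * Real.exp (-δ))) :
    (∫⁻ ω in A, Qk ω Bᶜ ∂P) ≤
      ENNReal.ofReal (2 / δ) *
        ((∫⁻ ω in A, KL (Qk ω) (Pk ω) ∂P) + ENNReal.ofReal (C * Real.exp (-δ / 2))) := by
  simpa only [KL_eq_klDiv, measure_univ, ENNReal.ofReal_mul hC.le] using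
    kl_transfer_general (P.restrict A) Pk Qk hB.compl hδ (h.trans_eq (ENNReal.ofReal_mul hC.le))

end GSVB
end
end

section
/- For every integer m ≥ 1, the Gamma function satisfies Γ((m+1)/2) ≤ 2 e^{−1/2} √π · m^{m/2} · (2e)^{−(m−1)/2}. -/
open MeasureTheory ProbabilityTheory Filter Matrix
open scoped ENNReal NNReal BigOperators Classical

noncomputable section

namespace GSVB

variable {n p M : ℕ}

/-!
The constant 2 in the bound can be dropped: `Γ(x + 1/2) ≤ √(2π) (x / e) ^ x` for every real
`x > 0`. Replacing `x` by `x + 1` does not decrease the ratio of the two sides, because `log` is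
concave and so its integral over `[x, x + 1]` is at most its value at the midpoint (the
Hermite–Hadamard inequality). Along `x, x + 1, x + 2, …` the ratio is bounded by the terms of
Stirling's sequence, by log-convexity of `Γ`, and these tend to the required constant.
-/

section

open Real Stirling Topology

theorem integral_le_mul_apply_midpoint_of_concaveOn {f : ℝ → ℝ} {a b : ℝ} (hab : a < b)
    (hf : ConcaveOn ℝ (Set.Icc a b) f) (hfc : ContinuousOn f (Set.Icc a b)) :
    ∫ x in a..b, f x ≤ (b - a) * f ((a + b) / 2) := by
  have hmean : ⨍ x in a..b, x = (a + b) / 2 := by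
    rw [interval_average_eq_div, integral_id, div_eq_iff (sub_pos.2 hab).ne']
    ring
  have hjensen : ⨍ x in a..b, f x ≤ f (⨍ x in a..b, x) := by
    rw [Set.uIoc_of_le hab.le]
    refine hf.le_map_set_average hfc isClosed_Icc (by simpa using hab) (by simp) ?_
      continuous_id.integrableOn_Ioc (hfc.integrableOn_Icc.mono_set Set.Ioc_subset_Icc_self)
    exact (ae_restrict_mem measurableSet_Ioc).mono fun _ hx => Set.Ioc_subset_Icc_self hx
  rwa [hmean, interval_average_eq_div, div_le_iff₀' (sub_pos.2 hab)] at hjensen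

lemma mul_log_sub_mul_log_le {a b : ℝ} (ha : 0 < a) (hab : a < b) :
    b * log b - a * log a ≤ (b - a) * (log ((a + b) / 2) + 1) := by
  have hpos : Set.Icc a b ⊆ Set.Ioi 0 := fun _ hx => ha.trans_le hx.1
  have h := integral_le_mul_apply_midpoint_of_concaveOn hab
    (strictConcaveOn_log_Ioi.concaveOn.subset hpos (convex_Icc a b))
    (continuousOn_log.mono fun _ hx => (hpos hx).ne')
  rw [integral_log] at h
  linarith

lemma log_Gamma_add_one {x : ℝ} (hx : 0 < x) :
    log (Gamma (x + 1)) = log (Gamma x) + log x := by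
  rw [Gamma_add_one hx.ne', log_mul hx.ne' (Gamma_pos_of_pos hx).ne', add_comm]

lemma log_Gamma_add_le {x y : ℝ} (hx : 0 < x) (hy₀ : 0 ≤ y) (hy₁ : y ≤ 1) :
    log (Gamma (x + y)) ≤ log (Gamma x) + y * log x := by
  have hconv := convexOn_log_Gamma.2 (Set.mem_Ioi.2 hx) (Set.mem_Ioi.2 (by linarith : 0 < x + 1))
    (sub_nonneg.2 hy₁) hy₀ (sub_add_cancel 1 y)
  simp only [smul_eq_mul, Function.comp_apply, log_Gamma_add_one hx] at hconv
  rw [show (1 - y) * x + y * (x + 1) = x + y by ring] at hconv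
  linarith

/-- The logarithm of `Γ(x + 1/2) / (x / e) ^ x`, the quotient of the Gamma function by the
main factor of Stirling's formula. -/
def logStirlingRatio (x : ℝ) : ℝ := log (Gamma (x + 1 / 2)) - x * log x + x

lemma logStirlingRatio_le_add_one {x : ℝ} (hx : 0 < x) :
    logStirlingRatio x ≤ logStirlingRatio (x + 1) := by
  have hΓ := log_Gamma_add_one (x := x + 1 / 2) (by linarith)
  have hlog := mul_log_sub_mul_log_le hx (lt_add_one x)
  rw [show (x + (x + 1)) / 2 = x + 1 / 2 by ring] at hlog
  rw [logStirlingRatio, logStirlingRatio, add_right_comm x 1 (1 / 2), hΓ]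
  linarith

lemma logStirlingRatio_le_add_nat {x : ℝ} (hx : 0 < x) (k : ℕ) :
    logStirlingRatio x ≤ logStirlingRatio (x + k) := by
  induction k with
  | zero => simp
  | succ k ih =>
    rw [Nat.cast_succ, ← add_assoc]
    exact ih.trans (logStirlingRatio_le_add_one (by positivity))

lemma log_sqrt_two_mul_stirlingSeq {k : ℕ} (hk : k ≠ 0) :
    log (√2 * stirlingSeq k) = log (Gamma k) + log k / 2 - k * log k + k := by
  obtain ⟨j, rfl⟩ := Nat.exists_eq_succ_of_ne_zero hk
  have hj : (0 : ℝ) < (j.succ : ℝ) := by positivity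
  rw [log_mul (by positivity) (stirlingSeq'_pos j).ne', log_sqrt zero_le_two,
    log_stirlingSeq_formula, log_mul two_ne_zero hj.ne', log_div hj.ne' (exp_ne_zero 1), log_exp,
    ← Gamma_nat_eq_factorial, log_Gamma_add_one hj]
  ring

lemma logStirlingRatio_le_log_stirlingSeq {x : ℝ} {k : ℕ} (hk : k ≠ 0) (hkx : k ≤ x + 1 / 2)
    (hxk : x + 1 / 2 ≤ k + 1) :
    logStirlingRatio x ≤ log (√2 * stirlingSeq k) := by
  have hk₁ : (1 : ℝ) ≤ k := by exact_mod_cast Nat.one_le_iff_ne_zero.2 hk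
  have hk₀ : (0 : ℝ) < k := by linarith
  have hx : 0 < x := by linarith
  have hΓ := log_Gamma_add_le hk₀ (sub_nonneg.2 hkx) (by linarith)
  rw [add_sub_cancel] at hΓ
  have hlog : x * (log k - log x) ≤ k - x := by
    rw [← log_div hk₀.ne' hx.ne']
    calc x * log (k / x) ≤ x * (k / x - 1) :=
          mul_le_mul_of_nonneg_left (log_le_sub_one_of_pos (by positivity)) hx.le
      _ = k - x := by field_simp
  rw [logStirlingRatio, log_sqrt_two_mul_stirlingSeq hk]
  linarith

lemma logStirlingRatio_le_log_sqrt_two_pi {x : ℝ} (hx : 0 < x) :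
    logStirlingRatio x ≤ log √(2 * π) := by
  have hlim : Tendsto (fun k : ℕ => log (√2 * stirlingSeq (k + (⌊x + 1 / 2⌋₊ + 1)))) atTop
      (𝓝 (log √(2 * π))) := by
    rw [sqrt_mul zero_le_two]
    exact ((tendsto_stirlingSeq_sqrt_pi.comp (tendsto_add_atTop_nat _)).const_mul √2).log
      (by positivity)
  refine ge_of_tendsto' hlim fun k =>
    (logStirlingRatio_le_add_nat hx (k + 1)).trans
      (logStirlingRatio_le_log_stirlingSeq (by omega) ?_ ?_)
  · push_cast
    linarith [Nat.floor_le (by positivity : 0 ≤ x + 1 / 2)]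
  · push_cast
    linarith [Nat.lt_floor_add_one (x + 1 / 2)]

theorem Gamma_add_half_le {x : ℝ} (hx : 0 < x) :
    Gamma (x + 1 / 2) ≤ √(2 * π) * (x / exp 1) ^ x := by
  have hΓ : 0 < Gamma (x + 1 / 2) := Gamma_pos_of_pos (by positivity)
  have h := logStirlingRatio_le_log_sqrt_two_pi hx
  rw [← log_le_log_iff hΓ (by positivity), log_mul (by positivity) (by positivity),
    log_rpow (by positivity), log_div hx.ne' (exp_ne_zero 1), log_exp]
  rw [logStirlingRatio] at h
  linarith

theorem gamma_succ_half_le_general {x : ℝ} (hx : 0 < x) :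
    Gamma ((x + 1) / 2) ≤
      exp (-(1 : ℝ) / 2) * √π * x ^ (x / 2) * (2 * exp 1) ^ (-(x - 1) / 2) := by
  have hconst : exp (-(1 : ℝ) / 2) * (2 * exp 1) ^ (1 / 2 : ℝ) = √2 := by
    rw [mul_rpow zero_le_two (exp_nonneg 1), ← sqrt_eq_rpow, mul_left_comm, ← exp_mul, ← exp_add]
    norm_num
  calc Gamma ((x + 1) / 2) = Gamma (x / 2 + 1 / 2) := by rw [add_div]
    _ ≤ √(2 * π) * (x / 2 / exp 1) ^ (x / 2) := Gamma_add_half_le (half_pos hx)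
    _ = √2 * √π * x ^ (x / 2) / (2 * exp 1) ^ (x / 2) := by
      rw [sqrt_mul zero_le_two, div_div, div_rpow hx.le (by positivity), mul_div_assoc]
    _ = exp (-(1 : ℝ) / 2) * √π * x ^ (x / 2) * (2 * exp 1) ^ (-(x - 1) / 2) := by
      rw [← hconst, show -(x - 1) / 2 = 1 / 2 - x / 2 by ring, rpow_sub (by positivity)]
      ring

end

/-- Nonasymptotic upper bound on the Gamma function:
Γ((m+1)/2) ≤ 2 e^{-1/2} √π m^{m/2} (2e)^{-(m-1)/2} for every integer m ≥ 1. -/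
theorem gamma_succ_half_le (m : ℕ) (hm : 1 ≤ m) :
    Real.Gamma (((m : ℝ) + 1) / 2) ≤
      2 * Real.exp (-(1:ℝ)/2) * Real.sqrt Real.pi *
        (m : ℝ) ^ ((m : ℝ) / 2) * (2 * Real.exp 1) ^ (-((m : ℝ) - 1) / 2) := by
  refine (gamma_succ_half_le_general (Nat.cast_pos.2 hm)).trans ?_
  gcongr
  linarith [Real.exp_pos (-(1 : ℝ) / 2)]

end GSVB
end
end
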